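/- With E, Φ as above and the Nehari manifold 𝒩 = {u ∈ E \ {0} : Φ'(u)u = 0}, the map m : S → 𝒩 given by m(w) = s_w·w (where S is the unit sphere of E and s_w is the unique maximum point of s ↦ Φ(sw)) is a homeomorphism, with inverse u ↦ u/‖u‖. -/

import Mathlib

open scoped BigOperators
open Filter Topology

noncomputable section

abbrev Vtx (N : ℕ) := Fin N → ℤ

def LatAdj {N : ℕ} (x y : Vtx N) : Prop := (∑ i, |x i - y i|) = 1

instance {N : ℕ} (x y : Vtx N) : Decidable (LatAdj x y) := by
  unfold LatAdj; infer_instance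

/-- `∑_x |u x|^p`. -/
noncomputable def lpSum (N : ℕ) (p : ℝ) (u : Vtx N → ℝ) : ℝ := ∑' x, |u x| ^ p

/-- `(1/2) ∑_{x∼y} |u x − u y|^p` (sum over ordered pairs of adjacent vertices). -/
noncomputable def pEnergy (N : ℕ) (p : ℝ) (u : Vtx N → ℝ) : ℝ :=
  (1/2) * ∑' z : Vtx N × Vtx N, if LatAdj z.1 z.2 then |u z.1 - u z.2| ^ p else 0

/-- `(1/2) ∑_{x∼y} |∇_{xy}u|^{p−2} (∇_{xy}u)(∇_{xy}v)`. -/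
noncomputable def gradPair (N : ℕ) (p : ℝ) (u v : Vtx N → ℝ) : ℝ :=
  (1/2) * ∑' z : Vtx N × Vtx N,
    if LatAdj z.1 z.2 then |u z.2 - u z.1| ^ (p - 2) * (u z.2 - u z.1) * (v z.2 - v z.1) else 0

/-- discrete p-Laplacian. -/
noncomputable def pLap (N : ℕ) (p : ℝ) (u : Vtx N → ℝ) (x : Vtx N) : ℝ :=
  ∑' y, if LatAdj x y then |u y - u x| ^ (p - 2) * (u y - u x) else 0

/-- `‖u‖^p` for the potential norm. -/
noncomputable def eNormP (N : ℕ) (p : ℝ) (V : Vtx N → ℝ) (u : Vtx N → ℝ) : ℝ :=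
  pEnergy N p u + ∑' x, V x * |u x| ^ p

/-- the potential norm `‖u‖`. -/
noncomputable def eNorm (N : ℕ) (p : ℝ) (V : Vtx N → ℝ) (u : Vtx N → ℝ) : ℝ :=
  (eNormP N p V u) ^ (1/p)

/-- `F(x,t) = ∫₀^t f(x,s) ds`. -/
noncomputable def Fprim {N : ℕ} (f : Vtx N → ℝ → ℝ) (x : Vtx N) (t : ℝ) : ℝ :=
  ∫ s in (0:ℝ)..t, f x s

/-- the variational functional `Φ`. -/
noncomputable def PhiFun (N : ℕ) (p : ℝ) (V : Vtx N → ℝ) (f : Vtx N → ℝ → ℝ)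
    (u : Vtx N → ℝ) : ℝ :=
  (1/p) * eNormP N p V u - ∑' x, Fprim f x (u x)

/-- `Φ'(u)v`. -/
noncomputable def PhiDeriv (N : ℕ) (p : ℝ) (V : Vtx N → ℝ) (f : Vtx N → ℝ → ℝ)
    (u v : Vtx N → ℝ) : ℝ :=
  gradPair N p u v + (∑' x, V x * |u x| ^ (p - 2) * u x * v x) - ∑' x, f x (u x) * v x

/-- membership in `E = ℓ^p`. -/
def memE (N : ℕ) (p : ℝ) (u : Vtx N → ℝ) : Prop := Summable fun x => |u x| ^ p

/-- the Nehari manifold. -/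
def Nehari (N : ℕ) (p : ℝ) (V : Vtx N → ℝ) (f : Vtx N → ℝ → ℝ) : Set (Vtx N → ℝ) :=
  {u | memE N p u ∧ u ≠ 0 ∧ PhiDeriv N p V f u u = 0}

abbrev Elp (N : ℕ) (p : ℝ) := lp (fun _ : Vtx N => ℝ) (ENNReal.ofReal p)

/-!
On a ray `s ↦ s w` through the unit sphere the Nehari condition reads `B (s w) / sᵖ = 1`, where
`B u = ∑ₓ f(x, u x) u x`. By the hypotheses on `f`, the left side increases strictly from `0` to `∞`
with `s`, so the ray meets the Nehari manifold at exactly one `s_w > 0`. Since `B` is continuous on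
`ℓᵖ`, strict monotonicity also makes `w ↦ s_w` continuous: the inequalities that locate `s_w`
between two values persist for nearby `w`. Conversely `‖u‖ = (B u)^(1/p)` on the Nehari manifold,
so `u ↦ u / ‖u‖` is continuous there. That `s_w` is the maximum point of `Φ` on its ray follows from
`F(x, t a) - F(x, a) ≥ (tᵖ - 1) / p * f(x, a) a`, the tangent inequality at `r = 1` for the convex
function `r ↦ F(x, r^(1/p) a)`.
-/

section ImplicitSolution

variable {X α β : Type*} [TopologicalSpace X] [LinearOrder α] [TopologicalSpace α]
  [OrderTopology α] [LinearOrder β] [TopologicalSpace β] [OrderClosedTopology β]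

theorem continuous_of_strictMonoOn_apply_eq {s : Set α} [s.OrdConnected] {g : X → α → β}
    {c : X → β} {σ : X → α} (hg_mono : ∀ x, StrictMonoOn (g x) s)
    (hg_cont : ∀ a ∈ s, Continuous fun x => g x a) (hc : Continuous c) (hσ : ∀ x, σ x ∈ s)
    (hgσ : ∀ x, g x (σ x) = c x) : Continuous σ := by
  refine continuous_iff_continuousAt.2 fun x => tendsto_order.2 ⟨fun a ha => ?_, fun a ha => ?_⟩
  · by_cases has : a ∈ s
    · have hlt : g x a < c x := hgσ x ▸ hg_mono x has (hσ x) ha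
      filter_upwards [(hg_cont a has).continuousAt.eventually_lt hc.continuousAt hlt] with y hy
      rwa [← hgσ y, (hg_mono y).lt_iff_lt has (hσ y)] at hy
    · exact .of_forall fun y => lt_of_not_ge fun hy =>
        has (Set.Icc_subset s (hσ y) (hσ x) ⟨hy, ha.le⟩)
  · by_cases has : a ∈ s
    · have hlt : c x < g x a := hgσ x ▸ hg_mono x (hσ x) has ha
      filter_upwards [hc.continuousAt.eventually_lt (hg_cont a has).continuousAt hlt] with y hy
      rwa [← hgσ y, (hg_mono y).lt_iff_lt (hσ y) has] at hy
    · exact .of_forall fun y => lt_of_not_ge fun hy =>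
        has (Set.Icc_subset s (hσ x) (hσ y) ⟨ha.le, hy⟩)

end ImplicitSolution

theorem isLittleO_norm_rpow_of_forall_norm_le {E F : Type*}
    [NormedAddCommGroup E] [NormedAddCommGroup F] {p : ℝ} {B : E → F}
    (hB : ∀ ε > 0, ∃ δ > 0, ∀ u, ‖u‖ < δ → ‖B u‖ ≤ ε * ‖u‖ ^ p) :
    B =o[𝓝 0] fun u => ‖u‖ ^ p := by
  refine Asymptotics.isLittleO_iff.2 fun ε hε => ?_
  obtain ⟨δ, hδ, hBδ⟩ := hB ε hε
  filter_upwards [Metric.ball_mem_nhds 0 hδ] with u hu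
  rw [Real.norm_of_nonneg (by positivity)]
  exact hBδ u (mem_ball_zero_iff.1 hu)

section Fibering

variable {E : Type*} [NormedAddCommGroup E] [NormedSpace ℝ E] {p : ℝ} {B ν : E → ℝ}

/-- The function `s ↦ B (s w) / sᵖ` on the ray through `w`. When `B u = Ψ'(u) u` and `ν` is
homogeneous of degree one, `s > 0` is a critical point of `s ↦ ν (s w)ᵖ / p - Ψ (s w)` exactly
when this function takes the value `ν wᵖ` at `s`. -/
def fiberQuotient (p : ℝ) (B : E → ℝ) (w : E) (s : ℝ) : ℝ := B (s • w) / s ^ p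

/-- The Nehari set of `νᵖ / p - Ψ`, where `B u` stands for `Ψ'(u) u`. -/
def nehariSet (p : ℝ) (ν B : E → ℝ) : Set E := {u | u ≠ 0 ∧ ν u ^ p = B u}

/-- A continuous function that grows strictly faster than any `p`-homogeneous one along every ray,
from order `o(‖u‖ᵖ)` at the origin to superlinear in `‖u‖ᵖ` at infinity. -/
structure IsSuperhomogeneous (p : ℝ) (B : E → ℝ) : Prop where
  continuous : Continuous B
  isLittleO : B =o[𝓝 0] fun u => ‖u‖ ^ p
  strictMonoOn : ∀ w ≠ 0, StrictMonoOn (fiberQuotient p B w) (Set.Ioi 0)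
  tendsto_atTop : ∀ w ≠ 0, Tendsto (fiberQuotient p B w) atTop atTop

theorem fiberQuotient_one (w : E) : fiberQuotient p B w 1 = B w := by
  rw [fiberQuotient, one_smul, Real.one_rpow, div_one]

theorem tendsto_fiberQuotient_zero (hB : B =o[𝓝 0] fun u => ‖u‖ ^ p) (w : E) :
    Tendsto (fiberQuotient p B w) (𝓝[>] 0) (𝓝 0) := by
  have hray : Tendsto (fun s : ℝ => s • w) (𝓝[>] 0) (𝓝 0) := by
    have hcont : Continuous fun s : ℝ => s • w := by fun_prop
    simpa only [zero_smul] using (hcont.tendsto 0).mono_left nhdsWithin_le_nhds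
  have hnorm : (fun s : ℝ => ‖s • w‖ ^ p) =O[𝓝[>] 0] fun s => s ^ p := by
    refine Asymptotics.IsBigO.of_bound (‖w‖ ^ p) ?_
    filter_upwards [self_mem_nhdsWithin] with s (hs : 0 < s)
    rw [norm_smul, Real.mul_rpow (norm_nonneg s) (norm_nonneg w), norm_mul, mul_comm,
      Real.norm_of_nonneg hs.le, Real.norm_of_nonneg (Real.rpow_nonneg (norm_nonneg w) p)]
  exact ((hB.comp_tendsto hray).trans_isBigO hnorm).tendsto_div_nhds_zero

namespace IsSuperhomogeneous

theorem fiberQuotient_pos (hB : IsSuperhomogeneous p B) {w : E} (hw : w ≠ 0) {s : ℝ}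
    (hs : 0 < s) : 0 < fiberQuotient p B w s := by
  have hhalf : 0 < s / 2 := half_pos hs
  have hnonneg : 0 ≤ fiberQuotient p B w (s / 2) := by
    refine le_of_tendsto (tendsto_fiberQuotient_zero hB.isLittleO w) ?_
    filter_upwards [Ioo_mem_nhdsGT hhalf] with r hr
    exact (hB.strictMonoOn w hw hr.1 hhalf hr.2).le
  exact hnonneg.trans_lt (hB.strictMonoOn w hw hhalf hs (half_lt_self hs))

theorem pos (hB : IsSuperhomogeneous p B) {w : E} (hw : w ≠ 0) : 0 < B w :=
  fiberQuotient_one (p := p) (B := B) w ▸ hB.fiberQuotient_pos hw one_pos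

theorem map_zero (hB : IsSuperhomogeneous p B) (hp : p ≠ 0) : B 0 = 0 := by
  have hle := (Asymptotics.isLittleO_iff.1 hB.isLittleO one_pos).self_of_nhds
  simpa only [norm_zero, Real.zero_rpow hp, mul_zero, norm_le_zero_iff] using hle

theorem fiberQuotient_zero_left (hB : IsSuperhomogeneous p B) (hp : p ≠ 0) (s : ℝ) :
    fiberQuotient p B 0 s = 0 := by
  rw [fiberQuotient, smul_zero, hB.map_zero hp, zero_div]

theorem fiberQuotient_nonneg (hB : IsSuperhomogeneous p B) (hp : p ≠ 0) (w : E) {s : ℝ}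
    (hs : 0 < s) : 0 ≤ fiberQuotient p B w s := by
  rcases eq_or_ne w 0 with rfl | hw
  · exact (hB.fiberQuotient_zero_left hp s).ge
  · exact (hB.fiberQuotient_pos hw hs).le

theorem monotoneOn_fiberQuotient (hB : IsSuperhomogeneous p B) (hp : p ≠ 0) (w : E) :
    MonotoneOn (fiberQuotient p B w) (Set.Ioi 0) := by
  rcases eq_or_ne w 0 with rfl | hw
  · intro s _ t _ _
    simp only [hB.fiberQuotient_zero_left hp, le_refl]
  · exact (hB.strictMonoOn w hw).monotoneOn

theorem continuousOn_fiberQuotient (hB : IsSuperhomogeneous p B) (w : E) :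
    ContinuousOn (fiberQuotient p B w) (Set.Ioi 0) :=
  (hB.continuous.comp (continuous_id.smul continuous_const)).continuousOn.div
    (continuousOn_id.rpow_const fun _ hs => Or.inl (Set.mem_Ioi.1 hs).ne')
    fun _ hs => (Real.rpow_pos_of_pos hs p).ne'

theorem exists_fiberQuotient_eq (hB : IsSuperhomogeneous p B) {w : E} (hw : w ≠ 0) {c : ℝ}
    (hc : 0 < c) : ∃ s > 0, fiberQuotient p B w s = c :=
  isPreconnected_Ioi.intermediate_value_Ioi (l₁ := 𝓝[>] 0) inf_le_right
    (le_principal_iff.2 (Ioi_mem_atTop 0)) (hB.continuousOn_fiberQuotient w)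
    (tendsto_fiberQuotient_zero hB.isLittleO w) (hB.tendsto_atTop w hw) hc

theorem continuous_of_fiberQuotient_eq {X : Type*} [TopologicalSpace X]
    (hB : IsSuperhomogeneous p B) {w : X → E} (hw : Continuous w) (hw_ne : ∀ x, w x ≠ 0)
    {c σ : X → ℝ} (hc : Continuous c) (hσ : ∀ x, 0 < σ x)
    (hσc : ∀ x, fiberQuotient p B (w x) (σ x) = c x) : Continuous σ :=
  continuous_of_strictMonoOn_apply_eq (fun x => hB.strictMonoOn (w x) (hw_ne x))
    (fun s _ => (hB.continuous.comp (hw.const_smul s)).div_const (s ^ p)) hc hσ hσc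

end IsSuperhomogeneous

theorem ne_zero_of_homogeneous_ne_zero (hν_smul : ∀ s > 0, ∀ u, ν (s • u) = s * ν u) {w : E}
    (hw : ν w ≠ 0) : w ≠ 0 := by
  rintro rfl
  have hdouble := hν_smul 2 two_pos 0
  rw [smul_zero] at hdouble
  exact hw (by linarith)

theorem smul_mem_nehariSet_iff (hν_smul : ∀ s > 0, ∀ u, ν (s • u) = s * ν u) {w : E}
    (hw : ν w = 1) {s : ℝ} (hs : 0 < s) :
    s • w ∈ nehariSet p ν B ↔ fiberQuotient p B w s = 1 := by
  have hsw : s • w ≠ 0 :=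
    smul_ne_zero hs.ne' (ne_zero_of_homogeneous_ne_zero hν_smul (hw.trans_ne one_ne_zero))
  rw [fiberQuotient, div_eq_one_iff_eq (Real.rpow_pos_of_pos hs p).ne', nehariSet,
    Set.mem_ofPred_eq, hν_smul s hs, hw, mul_one, and_iff_right hsw, eq_comm]

namespace IsSuperhomogeneous

theorem pos_of_mem_nehariSet (hB : IsSuperhomogeneous p B) (hp : p ≠ 0) (hν : ∀ u, 0 ≤ ν u)
    {u : E} (hu : u ∈ nehariSet p ν B) : 0 < ν u := by
  refine (hν u).lt_of_ne' fun hu_zero => (hB.pos hu.1).ne ?_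
  rw [← hu.2, hu_zero, Real.zero_rpow hp]

theorem continuousOn_nehariSet (hB : IsSuperhomogeneous p B) (hp : p ≠ 0) (hν : ∀ u, 0 ≤ ν u) :
    ContinuousOn ν (nehariSet p ν B) := by
  have hroot : Set.EqOn ν (fun u => B u ^ p⁻¹) (nehariSet p ν B) := fun u hu => by
    simp only [← hu.2, Real.rpow_rpow_inv (hν u) hp]
  refine ContinuousOn.congr ?_ hroot
  exact hB.continuous.continuousOn.rpow_const fun u hu => Or.inl (hB.pos hu.1).ne'

theorem exists_homeomorph_nehariSet (hB : IsSuperhomogeneous p B) (hp : p ≠ 0)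
    (hν : ∀ u, 0 ≤ ν u) (hν_smul : ∀ s > 0, ∀ u, ν (s • u) = s * ν u) :
    ∃ m : {w : E // ν w = 1} ≃ₜ nehariSet p ν B,
      (∀ w, ∃ s : ℝ, 0 < s ∧ (m w : E) = s • (w : E)) ∧
        ∀ u, (m.symm u : E) = (ν (u : E))⁻¹ • (u : E) := by
  have hne (w : {w : E // ν w = 1}) : (w : E) ≠ 0 :=
    ne_zero_of_homogeneous_ne_zero hν_smul (w.2.trans_ne one_ne_zero)
  choose σ hσ_pos hσ using fun w : {w : E // ν w = 1} =>
    hB.exists_fiberQuotient_eq (hne w) one_pos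
  have hσ_cont : Continuous σ :=
    hB.continuous_of_fiberQuotient_eq continuous_subtype_val hne continuous_const hσ_pos hσ
  have hν_pos (u : nehariSet p ν B) : 0 < ν (u : E) := hB.pos_of_mem_nehariSet hp hν u.2
  have hν_cont : Continuous fun u : nehariSet p ν B => ν (u : E) :=
    (hB.continuousOn_nehariSet hp hν).domRestrict
  have hsphere (u : nehariSet p ν B) : ν ((ν (u : E))⁻¹ • (u : E)) = 1 := by
    rw [hν_smul _ (inv_pos.2 (hν_pos u)), inv_mul_cancel₀ (hν_pos u).ne']
  let m : {w : E // ν w = 1} ≃ₜ nehariSet p ν B :=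
    { toFun w := ⟨σ w • (w : E), (smul_mem_nehariSet_iff hν_smul w.2 (hσ_pos w)).2 (hσ w)⟩
      invFun u := ⟨(ν (u : E))⁻¹ • (u : E), hsphere u⟩
      left_inv w := by
        refine Subtype.ext ?_
        simp only [hν_smul _ (hσ_pos w), w.2, mul_one, inv_smul_smul₀ (hσ_pos w).ne']
      right_inv u := by
        set w : {w : E // ν w = 1} := ⟨(ν (u : E))⁻¹ • (u : E), hsphere u⟩
        have hνw : ν (u : E) • (w : E) = u := smul_inv_smul₀ (hν_pos u).ne' _
        have hquot : fiberQuotient p B w (ν (u : E)) = 1 :=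
          (smul_mem_nehariSet_iff hν_smul w.2 (hν_pos u)).1 (hνw.symm ▸ u.2)
        have hσw : σ w = ν (u : E) :=
          (hB.strictMonoOn w (hne w)).injOn (hσ_pos w) (hν_pos u) ((hσ w).trans hquot.symm)
        exact Subtype.ext ((congrArg (· • (w : E)) hσw).trans hνw)
      continuous_toFun := (hσ_cont.smul continuous_subtype_val).subtype_mk _
      continuous_invFun :=
        ((hν_cont.inv₀ fun u => (hν_pos u).ne').smul continuous_subtype_val).subtype_mk _ }
  exact ⟨m, fun w => ⟨σ w, hσ_pos w, rfl⟩, fun _ => rfl⟩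

end IsSuperhomogeneous

end Fibering

section Superposition

open scoped ENNReal

variable {ι : Type*} {E : ι → Type*} [∀ i, NormedAddCommGroup (E i)] {r : ℝ≥0∞}

/-- The superposition (Nemytskii) functional `u ↦ ∑ i, b i (u i)` on `ℓʳ`, zero where the sum does
not converge. -/
def superposition {F : Type*} [AddCommMonoid F] [TopologicalSpace F] (b : ∀ i, E i → F)
    (u : lp E r) : F := ∑' i, b i (u i)

theorem exists_finset_eventually_tsum_compl_lt [Fact (1 ≤ r)] (hr : 0 < r.toReal) (u : lp E r)
    {ε : ℝ} (hε : 0 < ε) :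
    ∃ K : Finset ι, ∀ᶠ v : lp E r in 𝓝 u, ∑' i : {i // i ∉ K}, ‖v i‖ ^ r.toReal < ε := by
  have htail (K : Finset ι) (v : lp E r) :
      ∑' i : {i // i ∉ K}, ‖v i‖ ^ r.toReal = ‖v‖ ^ r.toReal - ∑ i ∈ K, ‖v i‖ ^ r.toReal := by
    rw [lp.norm_rpow_eq_tsum hr, ← (lp.hasSum_norm hr v).summable.sum_add_tsum_subtype_compl K,
      add_sub_cancel_left]
  have heval (i : ι) : Continuous fun v : lp E r => v i :=
    (lp.lipschitzWith_one_eval r i).continuous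
  simp only [htail]
  obtain ⟨K, hK⟩ := ((lp.hasSum_norm hr u).eventually_const_lt (sub_lt_self _ hε)).exists
  have hcont : Continuous fun v : lp E r => ‖v‖ ^ r.toReal - ∑ i ∈ K, ‖v i‖ ^ r.toReal :=
    (continuous_norm.rpow_const fun _ => Or.inr hr.le).sub <|
      continuous_finsetSum _ fun i _ => (heval i).norm.rpow_const fun _ => Or.inr hr.le
  exact ⟨K, hcont.continuousAt.eventually_lt_const (sub_lt_comm.1 hK)⟩

section Banach

variable {F : Type*} [NormedAddCommGroup F] {b : ∀ i, E i → F}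

theorem isLittleO_superposition [Fact (1 ≤ r)] (hr : 0 < r.toReal)
    (hb : ∀ ε > 0, ∃ δ > 0, ∀ i t, ‖t‖ < δ → ‖b i t‖ ≤ ε * ‖t‖ ^ r.toReal) :
    (superposition b : lp E r → F) =o[𝓝 0] fun u => ‖u‖ ^ r.toReal := by
  refine isLittleO_norm_rpow_of_forall_norm_le fun ε hε => ?_
  obtain ⟨δ, hδ, hbδ⟩ := hb ε hε
  refine ⟨δ, hδ, fun u hu => tsum_of_norm_bounded ((lp.hasSum_norm hr u).mul_left ε) fun i => ?_⟩
  exact hbδ i (u i) ((lp.norm_apply_le_norm (ENNReal.toReal_pos_iff.1 hr).1.ne' u i).trans_lt hu)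

variable [CompleteSpace F] {C δ : ℝ}

theorem summable_superposition (hr : 0 < r.toReal) (hδ : 0 < δ)
    (hb : ∀ i t, ‖t‖ < δ → ‖b i t‖ ≤ C * ‖t‖ ^ r.toReal) (u : lp E r) :
    Summable fun i => b i (u i) := by
  have hsum := (lp.hasSum_norm hr u).summable
  refine (hsum.mul_left C).of_norm_bounded_eventually ?_
  filter_upwards [hsum.tendsto_cofinite_zero.eventually_lt_const (Real.rpow_pos_of_pos hδ _)]
    with i hi
  exact hb i (u i) ((Real.rpow_lt_rpow_iff (norm_nonneg _) hδ.le hr).1 hi)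

/- Near `u` the tails of `∑ ‖v i‖ʳ` outside a finite set are uniformly small, so there `v` takes
values in the range of the bound on `b` and the functional is a uniform limit of finite sums. -/
theorem continuous_superposition [Fact (1 ≤ r)] (hr : 0 < r.toReal) (hcont : ∀ i, Continuous (b i))
    (hδ : 0 < δ) (hb : ∀ i t, ‖t‖ < δ → ‖b i t‖ ≤ C * ‖t‖ ^ r.toReal) :
    Continuous (superposition b : lp E r → F) := by
  refine continuous_iff_continuousAt.2 fun u =>
    continuousAt_of_locally_uniform_approx_of_continuousAt fun W hW => ?_
  obtain ⟨ε, hε, hεW⟩ := Metric.mem_uniformity_dist.1 hW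
  have hη : 0 < min (δ ^ r.toReal) (ε / (|C| + 1)) := by positivity
  obtain ⟨K, hK⟩ := exists_finset_eventually_tsum_compl_lt hr u hη
  refine ⟨_, hK, fun v => ∑ i ∈ K, b i (v i), ?_, fun v hv => hεW ?_⟩
  · exact (continuous_finsetSum _ fun i _ =>
      (hcont i).comp (lp.lipschitzWith_one_eval r i).continuous).continuousAt
  have hv_tail : ∑' i : {i // i ∉ K}, ‖v i‖ ^ r.toReal < min (δ ^ r.toReal) (ε / (|C| + 1)) := hv
  have hv_sum : Summable fun i : {i // i ∉ K} => ‖v i‖ ^ r.toReal :=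
    (lp.hasSum_norm hr v).summable.subtype {i | i ∉ K}
  have hv_small (i : {i // i ∉ K}) : ‖v i‖ < δ := by
    refine (Real.rpow_lt_rpow_iff (norm_nonneg _) hδ.le hr).1 ?_
    calc ‖v i‖ ^ r.toReal ≤ ∑' j : {j // j ∉ K}, ‖v j‖ ^ r.toReal :=
          hv_sum.le_tsum i fun j _ => by positivity
      _ < δ ^ r.toReal := hv_tail.trans_le (min_le_left _ _)
  calc dist (superposition b v) (∑ i ∈ K, b i (v i))
      = ‖∑' i : {i // i ∉ K}, b i (v i)‖ := by
        rw [dist_eq_norm, superposition,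
          ← (summable_superposition hr hδ hb v).sum_add_tsum_subtype_compl K, add_sub_cancel_left]
    _ ≤ C * ∑' i : {i // i ∉ K}, ‖v i‖ ^ r.toReal :=
        tsum_of_norm_bounded (hv_sum.hasSum.mul_left C) fun i => hb i (v i) (hv_small i)
    _ ≤ (|C| + 1) * ∑' i : {i // i ∉ K}, ‖v i‖ ^ r.toReal := by
        gcongr
        linarith [le_abs_self C]
    _ < ε := (lt_div_iff₀' (by positivity)).1 (hv_tail.trans_le (min_le_right _ _))

end Banach

variable [∀ i, NormedSpace ℝ (E i)] {b : ∀ i, E i → ℝ} {C δ : ℝ}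

theorem fiberQuotient_superposition [Fact (1 ≤ r)] (p : ℝ) (b : ∀ i, E i → ℝ) (w : lp E r) (s : ℝ) :
    fiberQuotient p (superposition b) w s = ∑' i, fiberQuotient p (b i) (w i) s :=
  tsum_div_const.symm

theorem summable_fiberQuotient (p : ℝ) (hr : 0 < r.toReal) (hδ : 0 < δ)
    (hb : ∀ i t, ‖t‖ < δ → ‖b i t‖ ≤ C * ‖t‖ ^ r.toReal) (w : lp E r) (s : ℝ) :
    Summable fun i => fiberQuotient p (b i) (w i) s :=
  (summable_superposition hr hδ hb (s • w)).div_const (s ^ p)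

theorem isSuperhomogeneous_superposition [Fact (1 ≤ r)] (hr : 0 < r.toReal)
    (hb : ∀ i, IsSuperhomogeneous r.toReal (b i))
    (hb_small : ∀ ε > 0, ∃ δ > 0, ∀ i t, ‖t‖ < δ → ‖b i t‖ ≤ ε * ‖t‖ ^ r.toReal) :
    IsSuperhomogeneous r.toReal (superposition b : lp E r → ℝ) := by
  obtain ⟨δ, hδ, hbδ⟩ := hb_small 1 one_pos
  have hsum := summable_fiberQuotient (E := E) r.toReal hr hδ hbδ
  have hne {w : lp E r} (hw : w ≠ 0) : ∃ i, w i ≠ 0 :=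
    Function.ne_iff.1 (mt lp.eq_zero_iff_coeFn_eq_zero.2 hw)
  refine ⟨continuous_superposition hr (fun i => (hb i).continuous) hδ hbδ,
    isLittleO_superposition hr hb_small, fun w hw s hs t ht hst => ?_, fun w hw => ?_⟩
  · obtain ⟨i, hi⟩ := hne hw
    simp only [fiberQuotient_superposition]
    exact (hsum w s).tsum_lt_tsum
      (fun j => (hb j).monotoneOn_fiberQuotient hr.ne' (w j) hs ht hst.le)
      ((hb i).strictMonoOn (w i) hi hs ht hst) (hsum w t)
  · obtain ⟨i, hi⟩ := hne hw
    refine tendsto_atTop_mono' atTop ?_ ((hb i).tendsto_atTop (w i) hi)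
    filter_upwards [eventually_gt_atTop 0] with s hs
    rw [fiberQuotient_superposition]
    exact (hsum w s).le_tsum i fun j _ => (hb j).fiberQuotient_nonneg hr.ne' (w j) hs

end Superposition

section Scalar

variable {p : ℝ} {g : ℝ → ℝ}

theorem norm_apply_mul_self_le {ε u : ℝ} (hp : p ≠ 0)
    (hg : |g u| ≤ ε * |u| ^ (p - 1)) : ‖g u * u‖ ≤ ε * ‖u‖ ^ p := by
  simp only [norm_mul, Real.norm_eq_abs]
  calc |g u| * |u| ≤ ε * |u| ^ (p - 1) * |u| := by gcongr
    _ = ε * |u| ^ p := by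
      rw [mul_assoc, ← Real.rpow_add_one' (abs_nonneg u) (by simpa using hp), sub_add_cancel]

theorem norm_primitive_le {ε u : ℝ} (hp : 1 ≤ p) (hε : 0 ≤ ε)
    (hg : ∀ s, |s| ≤ |u| → |g s| ≤ ε * |s| ^ (p - 1)) :
    ‖∫ s in (0 : ℝ)..u, g s‖ ≤ ε * ‖u‖ ^ p := by
  have hbound : ∀ s ∈ Set.uIoc 0 u, ‖g s‖ ≤ ε * |u| ^ (p - 1) := fun s hs => by
    have hsu : |s| ≤ |u| := by
      simpa only [sub_zero] using Set.abs_sub_left_of_mem_uIcc (Set.uIoc_subset_uIcc hs)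
    exact (hg s hsu).trans (by gcongr)
  calc ‖∫ s in (0 : ℝ)..u, g s‖ ≤ ε * |u| ^ (p - 1) * |u - 0| :=
        intervalIntegral.norm_integral_le_of_norm_le_const hbound
    _ = ε * ‖u‖ ^ p := by
      rw [sub_zero, mul_assoc, ← Real.rpow_add_one' (abs_nonneg u) (by linarith), sub_add_cancel,
        Real.norm_eq_abs]

theorem fiberQuotient_mul_self {a s : ℝ} (ha : a ≠ 0) (hs : 0 < s) :
    fiberQuotient p (fun u => g u * u) a s =
      g (s * a) / |s * a| ^ (p - 1) * (a * |a| ^ (p - 1)) := by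
  rw [fiberQuotient, smul_eq_mul, abs_mul, abs_of_pos hs, Real.mul_rpow hs.le (abs_nonneg a),
    Real.rpow_sub_one hs.ne']
  field_simp

theorem strictMonoOn_fiberQuotient_mul_self
    (hneg : StrictMonoOn (fun u => g u / |u| ^ (p - 1)) (Set.Iio 0))
    (hpos : StrictMonoOn (fun u => g u / |u| ^ (p - 1)) (Set.Ioi 0)) {a : ℝ} (ha : a ≠ 0) :
    StrictMonoOn (fiberQuotient p (fun u => g u * u) a) (Set.Ioi 0) := by
  intro s hs t ht hst
  rw [fiberQuotient_mul_self ha hs, fiberQuotient_mul_self ha ht]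
  have ha_pos : 0 < |a| ^ (p - 1) := Real.rpow_pos_of_pos (abs_pos.2 ha) _
  rcases ha.lt_or_gt with ha_neg | ha_pos'
  · exact mul_lt_mul_of_neg_right (hneg (mul_neg_of_pos_of_neg ht ha_neg)
      (mul_neg_of_pos_of_neg hs ha_neg) (mul_lt_mul_of_neg_right hst ha_neg))
      (mul_neg_of_neg_of_pos ha_neg ha_pos)
  · exact mul_lt_mul_of_pos_right (hpos (mul_pos hs ha_pos') (mul_pos ht ha_pos')
      (mul_lt_mul_of_pos_right hst ha_pos')) (mul_pos ha_pos' ha_pos)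

theorem monotoneOn_fiberQuotient_mul_self
    (hneg : StrictMonoOn (fun u => g u / |u| ^ (p - 1)) (Set.Iio 0))
    (hpos : StrictMonoOn (fun u => g u / |u| ^ (p - 1)) (Set.Ioi 0)) (a : ℝ) :
    MonotoneOn (fiberQuotient p (fun u => g u * u) a) (Set.Ioi 0) := by
  rcases eq_or_ne a 0 with rfl | ha
  · intro s _ t _ _
    simp only [fiberQuotient, smul_zero, mul_zero, zero_div, le_refl]
  · exact (strictMonoOn_fiberQuotient_mul_self hneg hpos ha).monotoneOn

theorem primitive_mul_sub_primitive (hg : Continuous g) (a t : ℝ) :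
    (∫ s in (0 : ℝ)..t * a, g s) - ∫ s in (0 : ℝ)..a, g s =
      ∫ τ in (1 : ℝ)..t, g (τ * a) * a := by
  rw [intervalIntegral.integral_interval_sub_left (hg.intervalIntegrable _ _)
    (hg.intervalIntegrable _ _), intervalIntegral.integral_mul_const, mul_comm (∫ _ in _.._, _),
    intervalIntegral.mul_integral_comp_mul_right, one_mul]

theorem mul_apply_eq_rpow_mul_fiberQuotient {a τ : ℝ} (hτ : 0 < τ) :
    g (τ * a) * a = τ ^ (p - 1) * fiberQuotient p (fun u => g u * u) a τ := by
  rw [fiberQuotient, smul_eq_mul, Real.rpow_sub_one hτ.ne']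
  field_simp

/- Along the ray through `a` the derivative `g (τ a) a` of the primitive is `τ ^ (p - 1)` times the
fiber quotient, which is compared with its value at `τ = 1`; the orientation of `1..t` makes both
`1 ≤ t` and `t ≤ 1` give `≤`. -/
theorem rpow_sub_one_div_mul_le_primitive_sub (hp : 0 < p) (hg : Continuous g) {a t : ℝ}
    (hmono : MonotoneOn (fiberQuotient p (fun u => g u * u) a) (Set.Ioi 0)) (ht : 0 ≤ t) :
    (t ^ p - 1) / p * (g a * a) ≤ (∫ s in (0 : ℝ)..t * a, g s) - ∫ s in (0 : ℝ)..a, g s := by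
  have hlhs : (t ^ p - 1) / p * (g a * a) =
      ∫ τ in (1 : ℝ)..t, τ ^ (p - 1) * fiberQuotient p (fun u => g u * u) a 1 := by
    rw [fiberQuotient_one, intervalIntegral.integral_mul_const,
      integral_rpow (Or.inl (by linarith)), sub_add_cancel, Real.one_rpow]
  have hint_left (c x y : ℝ) :
      IntervalIntegrable (fun τ : ℝ => τ ^ (p - 1) * c) MeasureTheory.volume x y :=
    (intervalIntegral.intervalIntegrable_rpow' (by linarith)).mul_const c
  have hint_right (x y : ℝ) :
      IntervalIntegrable (fun τ => g (τ * a) * a) MeasureTheory.volume x y :=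
    (by fun_prop : Continuous fun τ => g (τ * a) * a).intervalIntegrable x y
  rw [hlhs, primitive_mul_sub_primitive hg]
  rcases le_total 1 t with h1t | ht1
  · refine intervalIntegral.integral_mono_on_of_le_Ioo h1t (hint_left _ _ _) (hint_right _ _)
      fun τ hτ => ?_
    have hτ_pos : 0 < τ := one_pos.trans hτ.1
    rw [mul_apply_eq_rpow_mul_fiberQuotient hτ_pos]
    gcongr
    exact hmono (Set.mem_Ioi.2 one_pos) hτ_pos hτ.1.le
  · rw [intervalIntegral.integral_symm, intervalIntegral.integral_symm t 1]
    refine neg_le_neg (intervalIntegral.integral_mono_on_of_le_Ioo ht1 (hint_right _ _)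
      (hint_left _ _ _) fun τ hτ => ?_)
    have hτ_pos : 0 < τ := ht.trans_lt hτ.1
    rw [mul_apply_eq_rpow_mul_fiberQuotient hτ_pos]
    gcongr
    exact hmono hτ_pos (Set.mem_Ioi.2 one_pos) hτ.2.le

theorem mul_primitive_le (hp : 0 < p) (hg : Continuous g) {a : ℝ}
    (hmono : MonotoneOn (fiberQuotient p (fun u => g u * u) a) (Set.Ioi 0)) :
    p * ∫ s in (0 : ℝ)..a, g s ≤ g a * a := by
  have hle := rpow_sub_one_div_mul_le_primitive_sub hp hg hmono le_rfl
  rw [Real.zero_rpow hp.ne', zero_mul, intervalIntegral.integral_same, zero_sub, zero_sub,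
    neg_div, neg_mul, neg_le_neg_iff, one_div, ← div_eq_inv_mul, le_div_iff₀ hp] at hle
  linarith

theorem tendsto_fiberQuotient_mul_self_atTop (hp : 0 < p) (hg : Continuous g)
    (hmono : ∀ a, MonotoneOn (fiberQuotient p (fun u => g u * u) a) (Set.Ioi 0))
    (hsuper : Tendsto (fun u => (∫ s in (0 : ℝ)..u, g s) / |u| ^ p) (Bornology.cobounded ℝ) atTop)
    {a : ℝ} (ha : a ≠ 0) :
    Tendsto (fiberQuotient p (fun u => g u * u) a) atTop atTop := by
  have ha_pos : 0 < |a| ^ p := Real.rpow_pos_of_pos (abs_pos.2 ha) p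
  have hray : Tendsto (fun s : ℝ => s * a) atTop (Bornology.cobounded ℝ) := by
    simp only [← tendsto_norm_atTop_iff_cobounded, norm_mul]
    exact tendsto_norm_atTop_atTop.atTop_mul_const (norm_pos_iff.2 ha)
  refine tendsto_atTop_mono' atTop ?_ ((hsuper.comp hray).const_mul_atTop (mul_pos hp ha_pos))
  filter_upwards [eventually_gt_atTop 0] with s hs
  have hs_pos : 0 < s ^ p := Real.rpow_pos_of_pos hs p
  calc p * |a| ^ p * ((∫ τ in (0 : ℝ)..s * a, g τ) / |s * a| ^ p)
      = (p * ∫ τ in (0 : ℝ)..s * a, g τ) / s ^ p := by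
        rw [abs_mul, abs_of_pos hs, Real.mul_rpow hs.le (abs_nonneg a)]
        field_simp
    _ ≤ fiberQuotient p (fun u => g u * u) a s := by
        rw [fiberQuotient, smul_eq_mul]
        exact div_le_div_of_nonneg_right (mul_primitive_le hp hg (hmono _)) hs_pos.le

theorem isSuperhomogeneous_mul_self (hp : 0 < p) (hg : Continuous g)
    (hsmall : ∀ ε > 0, ∃ δ > 0, ∀ u, |u| < δ → |g u| ≤ ε * |u| ^ (p - 1))
    (hneg : StrictMonoOn (fun u => g u / |u| ^ (p - 1)) (Set.Iio 0))
    (hpos : StrictMonoOn (fun u => g u / |u| ^ (p - 1)) (Set.Ioi 0))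
    (hsuper : Tendsto (fun u => (∫ s in (0 : ℝ)..u, g s) / |u| ^ p)
      (Bornology.cobounded ℝ) atTop) :
    IsSuperhomogeneous p fun u => g u * u where
  continuous := hg.mul continuous_id
  isLittleO := isLittleO_norm_rpow_of_forall_norm_le fun ε hε => by
    obtain ⟨δ, hδ, hgδ⟩ := hsmall ε hε
    exact ⟨δ, hδ, fun u hu => norm_apply_mul_self_le hp.ne' (hgδ u hu)⟩
  strictMonoOn _ := strictMonoOn_fiberQuotient_mul_self hneg hpos
  tendsto_atTop _ := tendsto_fiberQuotient_mul_self_atTop hp hg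
    (monotoneOn_fiberQuotient_mul_self hneg hpos) hsuper

end Scalar

section Potential

variable {N : ℕ} {p : ℝ} {V : Vtx N → ℝ} {f : Vtx N → ℝ → ℝ}

theorem abs_rpow_sub_two_mul_mul_self (hp : p ≠ 0) (a : ℝ) : |a| ^ (p - 2) * a * a = |a| ^ p := by
  rw [mul_assoc, ← abs_mul_abs_self, ← sq, ← Real.rpow_natCast,
    ← Real.rpow_add' (abs_nonneg a) (by simpa using hp), Nat.cast_ofNat, sub_add_cancel]

theorem gradPair_self (hp : p ≠ 0) (u : Vtx N → ℝ) : gradPair N p u u = pEnergy N p u := by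
  simp only [gradPair, pEnergy, abs_rpow_sub_two_mul_mul_self hp]
  simp only [abs_sub_comm]

theorem PhiDeriv_self (hp : p ≠ 0) (u : Vtx N → ℝ) :
    PhiDeriv N p V f u u = eNormP N p V u - ∑' x, f x (u x) * u x := by
  have hpot (x : Vtx N) : V x * |u x| ^ (p - 2) * u x * u x = V x * |u x| ^ p := by
    rw [← abs_rpow_sub_two_mul_mul_self hp (u x)]
    ring
  simp only [PhiDeriv, eNormP, gradPair_self hp, hpot]

theorem eNormP_smul (s : ℝ) (u : Vtx N → ℝ) :
    eNormP N p V (s • u) = |s| ^ p * eNormP N p V u := by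
  have hgrad (z : Vtx N × Vtx N) :
      (if LatAdj z.1 z.2 then |s * u z.1 - s * u z.2| ^ p else 0) =
        |s| ^ p * if LatAdj z.1 z.2 then |u z.1 - u z.2| ^ p else 0 := by
    rw [← mul_sub, abs_mul, Real.mul_rpow (abs_nonneg s) (abs_nonneg _), mul_ite, mul_zero]
  have hpot (x : Vtx N) : V x * |s * u x| ^ p = |s| ^ p * (V x * |u x| ^ p) := by
    rw [abs_mul, Real.mul_rpow (abs_nonneg s) (abs_nonneg _), mul_left_comm]
  simp only [eNormP, pEnergy, Pi.smul_apply, smul_eq_mul, hgrad, hpot, tsum_mul_left]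
  ring

theorem eNormP_nonneg (hV : ∀ x, 0 ≤ V x) (u : Vtx N → ℝ) : 0 ≤ eNormP N p V u := by
  refine add_nonneg (mul_nonneg one_half_pos.le (tsum_nonneg fun z => ?_)) (tsum_nonneg fun x => ?_)
  · split_ifs <;> positivity
  · exact mul_nonneg (hV x) (by positivity)

theorem eNorm_nonneg (hV : ∀ x, 0 ≤ V x) (u : Vtx N → ℝ) : 0 ≤ eNorm N p V u :=
  Real.rpow_nonneg (eNormP_nonneg hV u) _

theorem eNorm_rpow (hp : p ≠ 0) (hV : ∀ x, 0 ≤ V x) (u : Vtx N → ℝ) :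
    eNorm N p V u ^ p = eNormP N p V u := by
  rw [eNorm, one_div, Real.rpow_inv_rpow (eNormP_nonneg hV u) hp]

theorem eNorm_smul (hp : p ≠ 0) (hV : ∀ x, 0 ≤ V x) (s : ℝ) (u : Vtx N → ℝ) :
    eNorm N p V (s • u) = |s| * eNorm N p V u := by
  rw [eNorm, eNormP_smul, Real.mul_rpow (by positivity) (eNormP_nonneg hV u), one_div,
    Real.rpow_rpow_inv (abs_nonneg s) hp, ← one_div, eNorm]

theorem memE_coe (hp : 0 < p) (u : Elp N p) : memE N p u := by
  have hp_toReal : (ENNReal.ofReal p).toReal = p := ENNReal.toReal_ofReal hp.le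
  have hsum := (lp.hasSum_norm (hp_toReal.symm ▸ hp) u).summable
  simpa only [memE, hp_toReal, Real.norm_eq_abs] using hsum

theorem coe_mem_Nehari_iff [Fact (1 ≤ ENNReal.ofReal p)] (hp : 0 < p) (hV : ∀ x, 0 ≤ V x)
    (u : Elp N p) : ⇑u ∈ Nehari N p V f ↔
      u ∈ nehariSet p (fun u : Elp N p => eNorm N p V u)
        (superposition fun x t => f x t * t) := by
  rw [Nehari, nehariSet, Set.mem_ofPred_eq, Set.mem_ofPred_eq, and_iff_right (memE_coe hp u),
    PhiDeriv_self hp.ne', sub_eq_zero, eNorm_rpow hp.ne' hV, ne_eq, ne_eq,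
    lp.eq_zero_iff_coeFn_eq_zero, superposition]

theorem isSuperhomogeneous_superposition_mul_self [Fact (1 ≤ ENNReal.ofReal p)] (hp : 0 < p)
    (hfc : ∀ x, Continuous (f x))
    (hsmall : ∀ ε > 0, ∃ δ > 0, ∀ x u, |u| < δ → |f x u| ≤ ε * |u| ^ (p - 1))
    (hmono : ∀ x, StrictMonoOn (fun u => f x u / |u| ^ (p - 1)) (Set.Iio 0) ∧
      StrictMonoOn (fun u => f x u / |u| ^ (p - 1)) (Set.Ioi 0))
    (hsuper : ∀ x, Tendsto (fun u => Fprim f x u / |u| ^ p) (Bornology.cobounded ℝ) atTop) :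
    IsSuperhomogeneous p (superposition fun x t => f x t * t : Elp N p → ℝ) := by
  have hlift := isSuperhomogeneous_superposition (E := fun _ : Vtx N => ℝ)
    (r := ENNReal.ofReal p) (b := fun x t => f x t * t)
  rw [ENNReal.toReal_ofReal hp.le] at hlift
  refine hlift hp (fun x => ?_) fun ε hε => ?_
  · refine isSuperhomogeneous_mul_self hp (hfc x) (fun ε hε => ?_) (hmono x).1 (hmono x).2
      (hsuper x)
    exact (hsmall ε hε).imp fun δ hδ => ⟨hδ.1, hδ.2 x⟩
  · obtain ⟨δ, hδ, hfδ⟩ := hsmall ε hε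
    exact ⟨δ, hδ, fun x t ht => norm_apply_mul_self_le hp.ne' (hfδ x t ht)⟩

theorem summable_Fprim (hp : 1 ≤ p) {C δ : ℝ} (hC : 0 ≤ C) (hδ : 0 < δ)
    (hf : ∀ x u, |u| < δ → |f x u| ≤ C * |u| ^ (p - 1)) (u : Elp N p) :
    Summable fun x => Fprim f x (u x) := by
  have hp_pos : 0 < p := one_pos.trans_le hp
  have hsum := summable_superposition (E := fun _ : Vtx N => ℝ) (r := ENNReal.ofReal p)
    (b := Fprim f) (C := C) (δ := δ)
  rw [ENNReal.toReal_ofReal hp_pos.le] at hsum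
  exact hsum hp_pos hδ (fun x t ht => norm_primitive_le hp hC fun s hs => hf x s (hs.trans_lt ht)) u

theorem summable_mul_self (hp : 0 < p) {C δ : ℝ} (hδ : 0 < δ)
    (hf : ∀ x u, |u| < δ → |f x u| ≤ C * |u| ^ (p - 1)) (u : Elp N p) :
    Summable fun x => f x (u x) * u x := by
  have hsum := summable_superposition (E := fun _ : Vtx N => ℝ) (r := ENNReal.ofReal p)
    (b := fun x t => f x t * t) (C := C) (δ := δ)
  rw [ENNReal.toReal_ofReal hp.le] at hsum
  exact hsum hp hδ (fun x t ht => norm_apply_mul_self_le hp.ne' (hf x t ht)) u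

theorem PhiFun_smul_le_of_coe_mem_Nehari (hp : 1 ≤ p) (hfc : ∀ x, Continuous (f x))
    {C δ : ℝ} (hC : 0 ≤ C) (hδ : 0 < δ) (hf : ∀ x u, |u| < δ → |f x u| ≤ C * |u| ^ (p - 1))
    (hmono : ∀ x a, MonotoneOn (fiberQuotient p (fun t => f x t * t) a) (Set.Ioi 0))
    {u : Elp N p} (hu : ⇑u ∈ Nehari N p V f) {t : ℝ} (ht : 0 ≤ t) :
    PhiFun N p V f (t • ⇑u) ≤ PhiFun N p V f u := by
  have hp_pos : 0 < p := one_pos.trans_le hp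
  have hF_sum : Summable fun x => Fprim f x (u x) := summable_Fprim hp hC hδ hf u
  have hF_sum_smul : Summable fun x => Fprim f x (t * u x) := summable_Fprim hp hC hδ hf (t • u)
  have hNehari : eNormP N p V u = ∑' x, f x (u x) * u x :=
    sub_eq_zero.1 ((PhiDeriv_self hp_pos.ne' u).symm.trans hu.2.2)
  have hray : (t ^ p - 1) / p * eNormP N p V u ≤
      (∑' x, Fprim f x (t * u x)) - ∑' x, Fprim f x (u x) := by
    rw [hNehari, ← tsum_mul_left, ← hF_sum_smul.tsum_sub hF_sum]
    exact ((summable_mul_self hp_pos hδ hf u).mul_left _).tsum_le_tsum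
      (fun x => rpow_sub_one_div_mul_le_primitive_sub hp_pos (hfc x) (hmono x (u x)) ht)
      (hF_sum_smul.sub hF_sum)
  have hexpand : (t ^ p - 1) / p * eNormP N p V u =
      1 / p * (t ^ p * eNormP N p V u) - 1 / p * eNormP N p V u := by ring
  simp only [PhiFun, eNormP_smul, abs_of_nonneg ht, Pi.smul_apply, smul_eq_mul]
  linarith

end Potential

theorem finite_range_of_periodic {ι α : Type*} [Finite ι] [DecidableEq ι] {V : (ι → ℤ) → α}
    {T : ℕ} (hT : 0 < T) (hV : ∀ x i, V (x + (T : ℤ) • Pi.single i 1) = V x) :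
    (Set.range V).Finite := by
  have := Fintype.ofFinite ι
  have hT_pos : (0 : ℤ) < T := Int.natCast_pos.2 hT
  have hperiod (k : ι → ℤ) : Function.Periodic V (∑ i, k i • (T : ℤ) • Pi.single i 1) :=
    Finset.sum_induction _ (Function.Periodic V) (fun _ _ => .add_period)
      (Function.periodic_with_period_zero V)
      fun i _ => (show Function.Periodic V _ from fun x => hV x i).zsmul (k i)
  refine ((Set.finite_Icc (0 : ι → ℤ) fun _ => T).image V).subset ?_
  rintro _ ⟨x, rfl⟩
  refine ⟨fun i => x i % T, ⟨fun i => Int.emod_nonneg _ hT_pos.ne', fun i =>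
    (Int.emod_lt_of_pos _ hT_pos).le⟩, ?_⟩
  have hx : x = (fun i => x i % T) + ∑ i, (x i / T) • (T : ℤ) • Pi.single i 1 := by
    ext j
    simp [Finset.sum_apply, Pi.single_apply, Int.emod_add_ediv_mul]
  conv_rhs => rw [hx]
  exact (hperiod _ _).symm

/- A bounded `V` makes the series in `eNorm` converge on `ℓᵖ`; a divergent one counts as `0`. -/
theorem stmt_12_general (N : ℕ) (p : ℝ) (V : Vtx N → ℝ) (f : Vtx N → ℝ → ℝ)
    (hfc : ∀ x, Continuous (f x)) (hV : ∀ x, 0 ≤ V x) (_hV_bdd : BddAbove (Set.range V))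
    (hA3 : ∀ ε > (0 : ℝ), ∃ δ > (0 : ℝ), ∀ x u, |u| < δ → |f x u| ≤ ε * |u| ^ (p - 1))
    (hA4 : ∀ x, StrictMonoOn (fun u => f x u / |u| ^ (p - 1)) (Set.Iio 0) ∧
      StrictMonoOn (fun u => f x u / |u| ^ (p - 1)) (Set.Ioi 0))
    (hA5 : ∀ x, Tendsto (fun u => Fprim f x u / |u| ^ p) (Bornology.cobounded ℝ) atTop)
    [Fact (1 ≤ ENNReal.ofReal p)] :
    ∃ m : {w : Elp N p // eNorm N p V ⇑w = 1} ≃ₜ {u : Elp N p // ⇑u ∈ Nehari N p V f},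
      (∀ w : {w : Elp N p // eNorm N p V ⇑w = 1},
        ∃ s : ℝ, 0 < s ∧ (⇑(m w : Elp N p) = s • ⇑(w : Elp N p)) ∧
          ∀ t : ℝ, 0 < t →
            PhiFun N p V f (t • ⇑(w : Elp N p)) ≤ PhiFun N p V f ⇑(m w : Elp N p)) ∧
      (∀ u : {u : Elp N p // ⇑u ∈ Nehari N p V f},
        ⇑(m.symm u : Elp N p) = (eNorm N p V ⇑(u : Elp N p))⁻¹ • ⇑(u : Elp N p)) := by
  have hp : 1 ≤ p := ENNReal.one_le_ofReal.1 Fact.out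
  have hp_pos : 0 < p := one_pos.trans_le hp
  have hB := isSuperhomogeneous_superposition_mul_self hp_pos hfc hA3 hA4 hA5
  obtain ⟨m, hm, hm_symm⟩ := hB.exists_homeomorph_nehariSet hp_pos.ne'
    (ν := fun u : Elp N p => eNorm N p V u) (fun u => eNorm_nonneg hV u) fun s hs u => by
      rw [lp.coeFn_smul, eNorm_smul hp_pos.ne' hV, abs_of_pos hs]
  let e : {u : Elp N p // ⇑u ∈ Nehari N p V f} ≃ₜ nehariSet p _ _ :=
    (Homeomorph.refl (Elp N p)).subtype (coe_mem_Nehari_iff hp_pos hV)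
  refine ⟨m.trans e.symm, fun w => ?_, fun u => congrArg (⇑) (hm_symm (e u))⟩
  obtain ⟨s, hs, hmw⟩ := hm w
  refine ⟨s, hs, congrArg (⇑) hmw, fun t ht => ?_⟩
  have hray : t • ⇑(w : Elp N p) = (t / s) • ⇑(e.symm (m w) : Elp N p) := by
    rw [show (e.symm (m w) : Elp N p) = s • (w : Elp N p) from hmw, lp.coeFn_smul, smul_smul,
      div_mul_cancel₀ t hs.ne']
  obtain ⟨δ, hδ, hfδ⟩ := hA3 1 one_pos
  rw [hray]
  exact PhiFun_smul_le_of_coe_mem_Nehari hp hfc zero_le_one hδ hfδ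
    (fun x => monotoneOn_fiberQuotient_mul_self (hA4 x).1 (hA4 x).2) (e.symm (m w)).2
    (div_pos ht hs).le

/-- the map w ↦ s_w • w is a homeomorphism from the unit sphere of E
onto the Nehari manifold, with inverse u ↦ u / ‖u‖. -/
theorem stmt_12 (N : ℕ) (p q : ℝ) (hp : 1 < p) (hq : p < q)
    (V : Vtx N → ℝ) (f : Vtx N → ℝ → ℝ) (T : ℕ) (hT : 0 < T)
    (hA1 : ∃ a : ℝ, 0 < a ∧ ∀ x u, |f x u| ≤ a * (1 + |u| ^ (q - 1)))
    (hfc : ∀ x, Continuous (f x))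
    (hA2V : ∀ x (i : Fin N), V (x + (T : ℤ) • Pi.single i 1) = V x)
    (hA2f : ∀ x (i : Fin N) (u : ℝ), f (x + (T : ℤ) • Pi.single i 1) u = f x u)
    (hVpos : ∀ x, 0 < V x)
    (hA3 : ∀ ε > (0:ℝ), ∃ δ > (0:ℝ), ∀ x u, |u| < δ → |f x u| ≤ ε * |u| ^ (p - 1))
    (hA4 : ∀ x, StrictMonoOn (fun u => f x u / |u| ^ (p - 1)) (Set.Iio 0) ∧
               StrictMonoOn (fun u => f x u / |u| ^ (p - 1)) (Set.Ioi 0))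
    (hA5 : ∀ M : ℝ, ∃ R > (0:ℝ), ∀ x u, R ≤ |u| → M ≤ Fprim f x u / |u| ^ p)
    [Fact (1 ≤ ENNReal.ofReal p)] :
    ∃ m : {w : Elp N p // eNorm N p V ⇑w = 1} ≃ₜ
          {u : Elp N p // ⇑u ∈ Nehari N p V f},
      (∀ w : {w : Elp N p // eNorm N p V ⇑w = 1},
        ∃ s : ℝ, 0 < s ∧ (⇑(m w : Elp N p) = s • ⇑(w : Elp N p)) ∧
          ∀ t : ℝ, 0 < t →
            PhiFun N p V f (t • ⇑(w : Elp N p)) ≤ PhiFun N p V f ⇑(m w : Elp N p)) ∧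
      (∀ u : {u : Elp N p // ⇑u ∈ Nehari N p V f},
        ⇑(m.symm u : Elp N p) = (eNorm N p V ⇑(u : Elp N p))⁻¹ • ⇑(u : Elp N p)) := by
  have hsuper (x : Vtx N) :
      Tendsto (fun u => Fprim f x u / |u| ^ p) (Bornology.cobounded ℝ) atTop := by
    refine tendsto_atTop.2 fun M => ?_
    obtain ⟨R, -, hR⟩ := hA5 M
    filter_upwards [tendsto_norm_cobounded_atTop.eventually_ge_atTop R] with u hu
    exact hR x u hu
  exact stmt_12_general N p V f hfc (fun x => (hVpos x).le)
    (finite_range_of_periodic hT hA2V).bddAbove hA3 hA4 hsuper
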